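/- Let f ∈ 𝒮(ℝ²) and g ∈ 𝒮(ℝ), and for ε > 0 define h_ε(x_h, x₃) = f(x_h) g(ε x₃). Then there exists ε₀ > 0 such that for all 0 < ε ≤ ε₀, ‖h_ε‖_{Ḃ^{-1}_{∞,∞}(ℝ³)} ≥ (1/4) ‖f‖_{Ḃ^{-1}_{∞,∞}(ℝ²)} ‖g‖_{L^∞(ℝ)}. -/

import Mathlib

open MeasureTheory Real
open scoped FourierTransform ENNReal

noncomputable section

/-- `ℝ^d` as a Euclidean space. -/
abbrev E (d : ℕ) := EuclideanSpace ℝ (Fin d)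

/-- Homogeneous Sobolev norm `‖f‖_{Ḣ^s(ℝ^d)} = (∫ |ξ|^{2s} |𝓕f(ξ)|² dξ)^{1/2}`. -/
noncomputable def hNorm (d : ℕ) (s : ℝ) (f : E d → ℂ) : ℝ :=
  (∫ ξ : E d, ‖ξ‖ ^ (2 * s) * ‖𝓕 f ξ‖ ^ 2) ^ (1/2 : ℝ)

/-- Heat semigroup `e^{tΔ}` on `ℝ^d`: convolution with the Gaussian heat kernel. -/
noncomputable def heat (d : ℕ) (t : ℝ) (u : E d → ℂ) (x : E d) : ℂ :=
  ∫ y : E d, ((4 * π * t) ^ (-(d : ℝ) / 2) * Real.exp (-‖x - y‖ ^ 2 / (4 * t)) : ℝ) * u y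

/-- Heat semigroup on `ℝ`. -/
noncomputable def heat1 (t : ℝ) (u : ℝ → ℂ) (x : ℝ) : ℂ :=
  ∫ y : ℝ, ((4 * π * t) ^ (-(1 : ℝ) / 2) * Real.exp (-(x - y) ^ 2 / (4 * t)) : ℝ) * u y

/-- The Besov `Ḃ^{-1}_{∞,∞}(ℝ^d)` norm via the heat flow. -/
noncomputable def besov (d : ℕ) (u : E d → ℂ) : ℝ :=
  ⨆ t > (0:ℝ), Real.sqrt t * ⨆ x : E d, ‖heat d t u x‖

/-!
The heat kernel of `ℝ^{d+1}` is the product of those of `ℝ^d` and `ℝ`, so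
`e^{tΔ}h_ε(x_h, x₃) = e^{tΔ}f(x_h) · e^{tΔ}(g(ε ·))(x₃)`. The second factor is at most `‖g‖_{L^∞}`,
while at `x₃ = y/ε` it tends to `g(y)` as `ε → 0`, because `e^{tΔ}` averages `g(ε ·)` over a
neighbourhood which shrinks to `y` after rescaling. Hence `‖h_ε‖` tends to `‖f‖ ‖g‖_{L^∞}`, and any
constant less than `1` is admissible in place of `1/4`.
-/

open Filter Topology Module
open scoped BoundedContinuousFunction

section HeatKernel

variable {V : Type*} [NormedAddCommGroup V] [InnerProductSpace ℝ V]

/-- The Gaussian heat kernel of a Euclidean space, normalized by the dimension of the space. It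
treats `E d` and `ℝ` uniformly. -/
def heatKernel (t : ℝ) (z : V) : ℝ :=
  (4 * π * t) ^ (-(finrank ℝ V : ℝ) / 2) * rexp (-‖z‖ ^ 2 / (4 * t))

lemma heatKernel_nonneg {t : ℝ} (ht : 0 < t) (z : V) : 0 ≤ heatKernel t z := by
  unfold heatKernel
  positivity

lemma heatKernel_le {t : ℝ} (ht : 0 < t) (z : V) :
    heatKernel t z ≤ (4 * π * t) ^ (-(finrank ℝ V : ℝ) / 2) := by
  refine mul_le_of_le_one_right (by positivity) (Real.exp_le_one_iff.2 ?_)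
  exact div_nonpos_of_nonpos_of_nonneg (neg_nonpos.2 (sq_nonneg _)) (by positivity)

lemma norm_heatKernel_mul {t : ℝ} (ht : 0 < t) (z : V) (w : ℂ) :
    ‖(heatKernel t z : ℂ) * w‖ = heatKernel t z * ‖w‖ := by
  rw [norm_mul, Complex.norm_of_nonneg (heatKernel_nonneg ht z)]

lemma continuous_heatKernel (t : ℝ) : Continuous (heatKernel t : V → ℝ) := by
  unfold heatKernel
  fun_prop

variable [FiniteDimensional ℝ V] [MeasurableSpace V] [BorelSpace V]

lemma integral_heatKernel {t : ℝ} (ht : 0 < t) : ∫ z : V, heatKernel t z = 1 := by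
  have hb : 0 < (4 * t)⁻¹ := by positivity
  have hexp (z : V) : rexp (-‖z‖ ^ 2 / (4 * t)) = rexp (-(4 * t)⁻¹ * ‖z‖ ^ 2) := by
    congr 1
    ring
  simp only [heatKernel, integral_const_mul, hexp,
    GaussianFourier.integral_rexp_neg_mul_sq_norm hb]
  rw [div_inv_eq_mul, ← mul_assoc, mul_comm π 4, ← Real.rpow_add (by positivity), neg_div,
    neg_add_cancel, Real.rpow_zero]

lemma integrable_heatKernel {t : ℝ} (ht : 0 < t) : Integrable (heatKernel t : V → ℝ) :=
  .of_integral_ne_zero (by simp [integral_heatKernel ht])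

/-- The heat semigroup `e^{tΔ}` on a Euclidean space: convolution with `heatKernel t`. -/
def heatFlow (t : ℝ) (u : V → ℂ) (x : V) : ℂ :=
  ∫ y, (heatKernel t (x - y) : ℂ) * u y

lemma heatFlow_eq_integral_sub (t : ℝ) (u : V → ℂ) (x : V) :
    heatFlow t u x = ∫ z, (heatKernel t z : ℂ) * u (x - z) := by
  rw [heatFlow, ← integral_sub_left_eq_self _ volume x]
  simp only [sub_sub_cancel]

lemma norm_heatFlow_le_of_norm_le {t : ℝ} (ht : 0 < t) {u : V → ℂ} {M : ℝ}
    (hM : ∀ y, ‖u y‖ ≤ M) (x : V) : ‖heatFlow t u x‖ ≤ M := by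
  rw [heatFlow_eq_integral_sub]
  calc ‖∫ z, (heatKernel t z : ℂ) * u (x - z)‖
      ≤ ∫ z : V, heatKernel t z * M := by
        refine norm_integral_le_of_norm_le ((integrable_heatKernel ht).mul_const M)
          (.of_forall fun z => ?_)
        rw [norm_heatKernel_mul ht]
        exact mul_le_mul_of_nonneg_left (hM _) (heatKernel_nonneg ht z)
    _ = M := by rw [integral_mul_const, integral_heatKernel ht, one_mul]

lemma norm_heatFlow_le_integral_norm {t : ℝ} (ht : 0 < t) {u : V → ℂ} (hu : Integrable u) (x : V) :
    ‖heatFlow t u x‖ ≤ (4 * π * t) ^ (-(finrank ℝ V : ℝ) / 2) * ∫ y, ‖u y‖ := by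
  rw [heatFlow, ← integral_const_mul]
  refine norm_integral_le_of_norm_le (hu.norm.const_mul _) (.of_forall fun y => ?_)
  rw [norm_heatKernel_mul ht]
  exact mul_le_mul_of_nonneg_right (heatKernel_le ht _) (norm_nonneg _)

lemma integrable_heatKernel_mul_of_norm_le {t : ℝ} (ht : 0 < t) {u : V → ℂ}
    (hu : AEStronglyMeasurable u) {M : ℝ} (hM : ∀ y, ‖u y‖ ≤ M) (x : V) :
    Integrable fun y => (heatKernel t (x - y) : ℂ) * u y :=
  ((integrable_heatKernel ht).comp_sub_left x).ofReal.mul_bdd hu (.of_forall hM)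

lemma tendsto_heatFlow_dilation {t : ℝ} (ht : 0 < t) (u : V →ᵇ ℂ) (y : V) :
    Tendsto (fun ε : ℝ => heatFlow t (fun z => u (ε • z)) (ε⁻¹ • y)) (𝓝[≠] 0) (𝓝 (u y)) := by
  have hlim : Tendsto (fun ε : ℝ => ∫ z, (heatKernel t z : ℂ) * u (y - ε • z)) (𝓝[≠] 0)
      (𝓝 (∫ z : V, (heatKernel t z : ℂ) * u y)) := by
    refine tendsto_integral_filter_of_dominated_convergence (fun z => heatKernel t z * ‖u‖)
      (.of_forall fun ε => ?_) (.of_forall fun ε => .of_forall fun z => ?_)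
      ((integrable_heatKernel ht).mul_const _) (.of_forall fun z => ?_)
    · have hkernel := continuous_heatKernel (V := V) t
      exact Continuous.aestronglyMeasurable (by fun_prop)
    · rw [norm_heatKernel_mul ht]
      exact mul_le_mul_of_nonneg_left (u.norm_coe_le_norm _) (heatKernel_nonneg ht z)
    · have hcont : Continuous fun ε : ℝ => (heatKernel t z : ℂ) * u (y - ε • z) := by fun_prop
      exact (hcont.tendsto' 0 _ (by simp)).mono_left nhdsWithin_le_nhds
  rw [integral_mul_const, integral_complex_ofReal, integral_heatKernel ht, Complex.ofReal_one,
    one_mul] at hlim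
  refine hlim.congr' ?_
  filter_upwards [self_mem_nhdsWithin] with ε hε
  simp only [heatFlow_eq_integral_sub, smul_sub, smul_inv_smul₀ hε]

end HeatKernel

section Besov

variable {d : ℕ} {u : E d → ℂ}

lemma heat_eq_heatFlow (t : ℝ) (u : E d → ℂ) : heat d t u = heatFlow t u := by
  ext x
  simp only [heat, heatFlow, heatKernel, finrank_euclideanSpace_fin]

/-- Membership in `Ḃ^{-1}_{∞,∞}(ℝ^d)`: the integrals that define `e^{tΔ}u` converge and the norm is
finite, so that neither the Bochner integral in `heat` nor the real suprema in `besov` take their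
junk value `0`. -/
structure MemBesov (u : E d → ℂ) : Prop where
  integrable : ∀ t > 0, ∀ x, Integrable fun y => (heatKernel t (x - y) : ℂ) * u y
  bounded : ∃ C, ∀ t > 0, ∀ x, √t * ‖heat d t u x‖ ≤ C

lemma besov_nonneg (u : E d → ℂ) : 0 ≤ besov d u :=
  Real.iSup_nonneg fun _ => Real.iSup_nonneg fun _ =>
    mul_nonneg (Real.sqrt_nonneg _) (Real.iSup_nonneg fun _ => norm_nonneg _)

lemma sqrt_mul_iSup_norm_heat_le {C t : ℝ} (h : ∀ x, √t * ‖heat d t u x‖ ≤ C) :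
    √t * ⨆ x, ‖heat d t u x‖ ≤ C := by
  rw [Real.mul_iSup_of_nonneg (Real.sqrt_nonneg t)]
  exact ciSup_le h

lemma besov_le {C : ℝ} (hC : 0 ≤ C) (h : ∀ t > 0, ∀ x, √t * ‖heat d t u x‖ ≤ C) :
    besov d u ≤ C :=
  Real.iSup_le (fun t => Real.iSup_le (fun ht => sqrt_mul_iSup_norm_heat_le (h t ht)) hC) hC

lemma exists_lt_of_lt_besov {c : ℝ} (hc : 0 ≤ c) (h : c < besov d u) :
    ∃ t > 0, ∃ x, c < √t * ‖heat d t u x‖ := by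
  contrapose! h
  exact besov_le hc h

lemma MemBesov.le_besov (hu : MemBesov u) {t : ℝ} (ht : 0 < t) (x : E d) :
    √t * ‖heat d t u x‖ ≤ besov d u := by
  obtain ⟨C, hC⟩ := hu.bounded
  have hC₀ : 0 ≤ C := le_trans (by positivity) (hC 1 one_pos 0)
  have hbdd_space : BddAbove (Set.range fun x => √t * ‖heat d t u x‖) :=
    ⟨C, Set.forall_mem_range.2 (hC t ht)⟩
  have hbdd_time : BddAbove (Set.range fun s : ℝ => ⨆ _ : s > 0, √s * ⨆ x, ‖heat d s u x‖) :=
    ⟨C, Set.forall_mem_range.2 fun s =>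
      Real.iSup_le (fun hs => sqrt_mul_iSup_norm_heat_le (hC s hs)) hC₀⟩
  calc √t * ‖heat d t u x‖
      ≤ √t * ⨆ x, ‖heat d t u x‖ := by
        rw [Real.mul_iSup_of_nonneg (Real.sqrt_nonneg t)]
        exact le_ciSup hbdd_space x
    _ = ⨆ _ : t > 0, √t * ⨆ x, ‖heat d t u x‖ := by rw [ciSup_pos ht]
    _ ≤ besov d u := le_ciSup hbdd_time t

lemma sqrt_mul_rpow_neg_half_le_one (hd : d ≠ 0) {t : ℝ} (ht : 1 ≤ t) :
    √t * (4 * π * t) ^ (-(d : ℝ) / 2) ≤ 1 := by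
  have hd₁ : (1 : ℝ) ≤ d := by exact_mod_cast Nat.one_le_iff_ne_zero.2 hd
  have hbase : t ≤ 4 * π * t := by nlinarith [Real.pi_gt_three]
  calc √t * (4 * π * t) ^ (-(d : ℝ) / 2)
      ≤ √t * t ^ (-(d : ℝ) / 2) := by
        gcongr √t * ?_
        exact Real.rpow_le_rpow_of_nonpos (by positivity) hbase (by linarith)
    _ ≤ √t * t ^ (-(1 / 2) : ℝ) := by
        gcongr √t * ?_
        exact Real.rpow_le_rpow_of_exponent_le ht (by linarith)
    _ = 1 := by
        rw [Real.sqrt_eq_rpow, ← Real.rpow_add (by positivity), add_neg_cancel, Real.rpow_zero]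

lemma MemBesov.of_integrable_of_norm_le (hd : d ≠ 0) (hu : Integrable u) {M : ℝ}
    (hM : ∀ y, ‖u y‖ ≤ M) : MemBesov u where
  integrable t ht := integrable_heatKernel_mul_of_norm_le ht hu.aestronglyMeasurable hM
  bounded := by
    refine ⟨max M (∫ y, ‖u y‖), fun t ht x => ?_⟩
    rw [heat_eq_heatFlow]
    -- For large `t` the growth of `√t` is absorbed by the `L¹ → L^∞` decay `t^{-d/2}`.
    rcases le_total t 1 with ht₁ | ht₁
    · calc √t * ‖heatFlow t u x‖
          ≤ 1 * ‖heatFlow t u x‖ := by gcongr; exact Real.sqrt_le_one.2 ht₁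
        _ ≤ M := by simpa only [one_mul] using norm_heatFlow_le_of_norm_le ht hM x
        _ ≤ _ := le_max_left _ _
    · calc √t * ‖heatFlow t u x‖
          ≤ √t * ((4 * π * t) ^ (-(d : ℝ) / 2) * ∫ y, ‖u y‖) := by
            gcongr
            simpa only [finrank_euclideanSpace_fin] using norm_heatFlow_le_integral_norm ht hu x
        _ = √t * (4 * π * t) ^ (-(d : ℝ) / 2) * ∫ y, ‖u y‖ := by ring
        _ ≤ ∫ y, ‖u y‖ :=
            mul_le_of_le_one_left (by positivity) (sqrt_mul_rpow_neg_half_le_one hd ht₁)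
        _ ≤ _ := le_max_right _ _

lemma MemBesov.of_schwartz (hd : d ≠ 0) (f : SchwartzMap (E d) ℂ) : MemBesov f :=
  .of_integrable_of_norm_le hd f.integrable (f.norm_le_seminorm ℝ)

end Besov

section Tensor

variable {d : ℕ}

/-- The projection `x_h` of `x = (x_h, x_{d+1})` to the first `d` coordinates. -/
def horizontal (x : E (d + 1)) : E d := WithLp.toLp 2 fun i => x i.castSucc

/-- The product `f ⊗ g`, that is `(x_h, x_{d+1}) ↦ f(x_h) g(x_{d+1})`. -/
def tensorLast (f : E d → ℂ) (g : ℝ → ℂ) (x : E (d + 1)) : ℂ :=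
  f (horizontal x) * g (x (Fin.last d))

lemma tensorLast_two (f : E 2 → ℂ) (g : ℝ → ℂ) :
    tensorLast f g = fun x : E 3 =>
      f ((EuclideanSpace.equiv (Fin 2) ℝ).symm ![x 0, x 1]) * g (x 2) := by
  ext x
  rw [tensorLast]
  congr 2
  ext i
  fin_cases i <;> rfl

/-- The identification of `ℝ^{d+1}` with `ℝ × ℝ^d` by `x ↦ (x_{d+1}, x_h)`, with the last
coordinate first as in `MeasurableEquiv.piFinSuccAbove`. -/
def splitLast (d : ℕ) : E (d + 1) ≃ᵐ ℝ × E d :=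
  (MeasurableEquiv.toLp 2 (Fin (d + 1) → ℝ)).symm.trans <|
    (MeasurableEquiv.piFinSuccAbove (fun _ => ℝ) (Fin.last d)).trans <|
      (MeasurableEquiv.refl ℝ).prodCongr (MeasurableEquiv.toLp 2 (Fin d → ℝ))

lemma splitLast_apply (x : E (d + 1)) : splitLast d x = (x (Fin.last d), horizontal x) := by
  ext i <;> simp [splitLast, horizontal, MeasurableEquiv.prodCongr, Fin.init]

lemma measurePreserving_splitLast : MeasurePreserving (splitLast d) :=
  ((MeasurePreserving.id volume).prod (PiLp.volume_preserving_toLp (Fin d))).comp <|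
    (volume_preserving_piFinSuccAbove (fun _ => ℝ) (Fin.last d)).comp
      (PiLp.volume_preserving_ofLp (Fin (d + 1)))

lemma heatKernel_eq_mul_horizontal {t : ℝ} (ht : 0 < t) (z : E (d + 1)) :
    heatKernel t z = heatKernel t (z (Fin.last d)) * heatKernel t (horizontal z) := by
  have hnorm : ‖z‖ ^ 2 = ‖z (Fin.last d)‖ ^ 2 + ‖horizontal z‖ ^ 2 := by
    simp only [EuclideanSpace.norm_sq_eq, Fin.sum_univ_castSucc, horizontal]
    ring
  have hexp : rexp (-‖z‖ ^ 2 / (4 * t)) =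
      rexp (-‖z (Fin.last d)‖ ^ 2 / (4 * t)) * rexp (-‖horizontal z‖ ^ 2 / (4 * t)) := by
    rw [hnorm, ← Real.exp_add]
    congr 1
    ring
  have hnormalization : (4 * π * t) ^ (-((d + 1 : ℕ) : ℝ) / 2) =
      (4 * π * t) ^ (-((1 : ℕ) : ℝ) / 2) * (4 * π * t) ^ (-(d : ℝ) / 2) := by
    rw [← Real.rpow_add (by positivity)]
    push_cast
    congr 1
    ring
  simp only [heatKernel, finrank_euclideanSpace_fin, finrank_self, hexp, hnormalization]
  ring

lemma heatKernel_mul_tensorLast {t : ℝ} (ht : 0 < t) (f : E d → ℂ) (g : ℝ → ℂ) (x y : E (d + 1)) :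
    (heatKernel t (x - y) : ℂ) * tensorLast f g y =
      heatKernel t (x (Fin.last d) - (splitLast d y).1) * g (splitLast d y).1 *
        (heatKernel t (horizontal x - (splitLast d y).2) * f (splitLast d y).2) := by
  have hsub : horizontal (x - y) = horizontal x - horizontal y := rfl
  rw [heatKernel_eq_mul_horizontal ht, hsub, splitLast_apply, tensorLast, PiLp.sub_apply,
    Complex.ofReal_mul]
  ring

lemma heatFlow_tensorLast {t : ℝ} (ht : 0 < t) (f : E d → ℂ) (g : ℝ → ℂ) (x : E (d + 1)) :
    heatFlow t (tensorLast f g) x =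
      heatFlow t g (x (Fin.last d)) * heatFlow t f (horizontal x) := by
  simp only [heatFlow, heatKernel_mul_tensorLast ht]
  rw [← integral_prod_mul]
  exact measurePreserving_splitLast.integral_comp' (g := fun p : ℝ × E d =>
    (heatKernel t (x (Fin.last d) - p.1) : ℂ) * g p.1 *
      (heatKernel t (horizontal x - p.2) * f p.2))

lemma integrable_heatKernel_mul_tensorLast {t : ℝ} (ht : 0 < t) {f : E d → ℂ} {g : ℝ → ℂ}
    {x : E (d + 1)} (hf : Integrable fun y => (heatKernel t (horizontal x - y) : ℂ) * f y)
    (hg : Integrable fun s => (heatKernel t (x (Fin.last d) - s) : ℂ) * g s) :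
    Integrable fun y => (heatKernel t (x - y) : ℂ) * tensorLast f g y := by
  simp only [heatKernel_mul_tensorLast ht]
  exact (measurePreserving_splitLast.integrable_comp_emb
    (splitLast d).measurableEmbedding).2 (hg.mul_prod hf)

lemma sqrt_mul_norm_heat_tensorLast {t : ℝ} (ht : 0 < t) (f : E d → ℂ) (g : ℝ → ℂ) (x : E (d + 1)) :
    √t * ‖heat (d + 1) t (tensorLast f g) x‖ =
      √t * ‖heat d t f (horizontal x)‖ * ‖heatFlow t g (x (Fin.last d))‖ := by
  rw [heat_eq_heatFlow, heat_eq_heatFlow, heatFlow_tensorLast ht, norm_mul]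
  ring

variable {f : E d → ℂ}

lemma MemBesov.sqrt_mul_norm_heat_tensorLast_le (hf : MemBesov f) {g : ℝ → ℂ} {M : ℝ}
    (hM : ∀ s, ‖g s‖ ≤ M) {t : ℝ} (ht : 0 < t) (x : E (d + 1)) :
    √t * ‖heat (d + 1) t (tensorLast f g) x‖ ≤ besov d f * M := by
  rw [sqrt_mul_norm_heat_tensorLast ht]
  exact mul_le_mul (hf.le_besov ht _) (norm_heatFlow_le_of_norm_le ht hM _) (norm_nonneg _)
    (besov_nonneg f)

protected lemma MemBesov.tensorLast (hf : MemBesov f) {g : ℝ → ℂ} (hg : AEStronglyMeasurable g)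
    {M : ℝ} (hM : ∀ s, ‖g s‖ ≤ M) : MemBesov (tensorLast f g) where
  integrable t ht _ := integrable_heatKernel_mul_tensorLast ht (hf.integrable t ht _)
    (integrable_heatKernel_mul_of_norm_le ht hg hM _)
  bounded := ⟨_, fun _ => hf.sqrt_mul_norm_heat_tensorLast_le hM⟩

lemma MemBesov.besov_tensorLast_le (hf : MemBesov f) {g : ℝ → ℂ} {M : ℝ} (hM : ∀ s, ‖g s‖ ≤ M) :
    besov (d + 1) (tensorLast f g) ≤ besov d f * M :=
  besov_le (mul_nonneg (besov_nonneg f) ((norm_nonneg _).trans (hM 0)))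
    fun _ => hf.sqrt_mul_norm_heat_tensorLast_le hM

lemma exists_lt_sqrt_mul_norm_heat_mul_norm {g : ℝ →ᵇ ℂ} {a : ℝ} (ha : a < besov d f * ‖g‖) :
    ∃ t > 0, ∃ x y, a < √t * ‖heat d t f x‖ * ‖g y‖ := by
  rcases lt_or_ge a 0 with ha₀ | ha₀
  · exact ⟨1, one_pos, 0, 0, ha₀.trans_le (by positivity)⟩
  have hg : 0 < ‖g‖ := pos_of_mul_pos_right (ha₀.trans_lt ha) (besov_nonneg f)
  obtain ⟨t, ht, x, hx⟩ :=
    exists_lt_of_lt_besov (div_nonneg ha₀ hg.le) ((div_lt_iff₀ hg).2 ha)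
  have hpos : 0 < √t * ‖heat d t f x‖ := (div_nonneg ha₀ hg.le).trans_lt hx
  have hlt : a / (√t * ‖heat d t f x‖) < ⨆ y, ‖g y‖ := by
    rwa [← g.norm_eq_iSup_norm, div_lt_comm₀ hpos hg]
  obtain ⟨y, hy⟩ := exists_lt_of_lt_ciSup hlt
  exact ⟨t, ht, x, y, (div_lt_iff₀' hpos).1 hy⟩

lemma exists_horizontal_eq_and_last_eq (x : E d) (s : ℝ) :
    ∃ z : E (d + 1), horizontal z = x ∧ z (Fin.last d) = s :=
  ⟨WithLp.toLp 2 (Fin.snoc x s), by ext i; simp [horizontal], by simp⟩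

theorem MemBesov.eventually_lt_besov_tensorLast_dilation (hf : MemBesov f) (g : ℝ →ᵇ ℂ) {a : ℝ}
    (ha : a < besov d f * ‖g‖) :
    ∀ᶠ ε in 𝓝[≠] 0, a < besov (d + 1) (tensorLast f fun s => g (ε * s)) := by
  obtain ⟨t, ht, x, y, hlt⟩ := exists_lt_sqrt_mul_norm_heat_mul_norm ha
  have hlim := (tendsto_heatFlow_dilation ht g y).norm.const_mul (√t * ‖heat d t f x‖)
  filter_upwards [hlim.eventually (lt_mem_nhds hlt)] with ε hε
  obtain ⟨z, hzx, hz⟩ := exists_horizontal_eq_and_last_eq x (ε⁻¹ • y)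
  have hmem : MemBesov (tensorLast f fun s => g (ε * s)) :=
    hf.tensorLast (Continuous.aestronglyMeasurable (by fun_prop)) fun _ => g.norm_coe_le_norm _
  refine lt_of_lt_of_le ?_ (hmem.le_besov ht z)
  rwa [sqrt_mul_norm_heat_tensorLast ht, hzx, hz]

theorem MemBesov.tendsto_besov_tensorLast_dilation (hf : MemBesov f) (g : ℝ →ᵇ ℂ) :
    Tendsto (fun ε : ℝ => besov (d + 1) (tensorLast f fun s => g (ε * s))) (𝓝[≠] 0)
      (𝓝 (besov d f * ‖g‖)) :=
  tendsto_order.2 ⟨fun _ => hf.eventually_lt_besov_tensorLast_dilation g, fun _ ha =>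
    .of_forall fun _ => (hf.besov_tensorLast_le fun _ => g.norm_coe_le_norm _).trans_lt ha⟩

theorem slow_variation_besov_lower_bound_general (hf : MemBesov f) (g : ℝ →ᵇ ℂ)
    {c : ℝ} (hc : c < 1) :
    ∃ ε₀ > (0 : ℝ), ∀ ε : ℝ, 0 < ε → ε ≤ ε₀ →
      c * besov d f * ‖g‖ ≤ besov (d + 1) (tensorLast f fun s => g (ε * s)) := by
  rcases (mul_nonneg (besov_nonneg f) (norm_nonneg g)).eq_or_lt with hzero | hpos
  · refine ⟨1, one_pos, fun ε _ _ => ?_⟩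
    rw [mul_assoc, ← hzero, mul_zero]
    exact besov_nonneg _
  · have hlt : c * besov d f * ‖g‖ < besov d f * ‖g‖ := by
      rw [mul_assoc]
      exact mul_lt_of_lt_one_left hpos hc
    obtain ⟨ε₀, hε₀, hlower⟩ := mem_nhdsGT_iff_exists_Ioc_subset.1 <|
      nhdsGT_le_nhdsNE 0 ((hf.tendsto_besov_tensorLast_dilation g).eventually_const_lt hlt)
    exact ⟨ε₀, hε₀, fun ε hε hle => (hlower ⟨hε, hle⟩).le⟩

end Tensor

/-- for `h_ε(x_h,x₃) = f(x_h) g(εx₃)` with `f ∈ 𝒮(ℝ²)`, `g ∈ 𝒮(ℝ)`,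
`‖h_ε‖_{Ḃ^{-1}_{∞,∞}(ℝ³)} ≥ (1/4) ‖f‖_{Ḃ^{-1}_{∞,∞}(ℝ²)} ‖g‖_{L^∞(ℝ)}` for `ε` small enough. -/
theorem slow_variation_besov_lower_bound
    (f : SchwartzMap (E 2) ℂ) (g : SchwartzMap ℝ ℂ) :
    ∃ ε₀ > (0:ℝ), ∀ ε : ℝ, 0 < ε → ε ≤ ε₀ →
      besov 3 (fun x : E 3 =>
          f ((EuclideanSpace.equiv (Fin 2) ℝ).symm ![x 0, x 1]) * g (ε * x 2)) ≥
        (1/4) * besov 2 ⇑f * ⨆ y : ℝ, ‖g y‖ := by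
  simpa only [tensorLast_two, BoundedContinuousFunction.norm_eq_iSup_norm,
    SchwartzMap.toBoundedContinuousFunction_apply] using
    slow_variation_besov_lower_bound_general (.of_schwartz two_ne_zero f)
      g.toBoundedContinuousFunction (c := 1 / 4) (by norm_num)
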